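/- arXiv:2011.02537 — 3 statements merged into one kernel-verified Lean document; each statement's English description precedes it below -/
import Mathlib

section
/- Let T = conv(v1, v2, v3) be a nondegenerate triangle in ℝ² and let m12, m23, m13 denote the midpoints of the segments [v1,v2], [v2,v3], [v1,v3]. Then the four closed subtriangles of the red refinement of T have pairwise disjoint interiors, their union equals T, and each of the four subtriangles has area equal to one quarter of the area of T. -/
noncomputable section

open MeasureTheory

/-- The Euclidean plane. -/
abbrev E2 : Type := EuclideanSpace ℝ (Fin 2)

/-- The (closed) triangle with vertices `a`, `b`, `c`. -/
def tri (a b c : E2) : Set E2 := convexHull ℝ {a, b, c}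

/-!
In the barycentric coordinates `c₀, c₁, c₂` of `T`, each corner piece is the part `1 / 2 ≤ cᵢ` of
`T` and the middle piece is given by `cᵢ ≤ 1 / 2` for all `i`. Hence the pieces cover `T`, and since
`cᵢ + cⱼ ≤ 1` on `T`, any two of them lie on opposite sides of some line `cᵢ = 1 / 2`, so their
interiors are disjoint. Each piece is the image of `T` under a homothety of ratio `1 / 2` about a
vertex or `-1 / 2` about the centroid, which divides areas by `4`.
-/

section Homothety

variable {k V P : Type*} [Field k] [AddCommGroup V] [Module k V] [AddTorsor V P]

theorem apply_homothety (f : P →ᵃ[k] k) (p x : P) (r : k) :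
    f (AffineMap.homothety p r x) = r * (f x - f p) + f p := by
  rw [AffineMap.homothety_eq_lineMap, AffineMap.apply_lineMap, AffineMap.lineMap_apply,
    vsub_eq_sub, smul_eq_mul, vadd_eq_add]

theorem mem_image_homothety_iff {p x : P} {r : k} (hr : r ≠ 0) {s : Set P} :
    x ∈ AffineMap.homothety p r '' s ↔ AffineMap.homothety p r⁻¹ x ∈ s := by
  simp only [Set.mem_image, AffineMap.homothety_eq_iff_of_mul_eq_one (mul_inv_cancel₀ hr),
    exists_eq_right']

end Homothety

section Simplex

variable {ι k E : Type*} [Field k] [LinearOrder k] [IsStrictOrderedRing k] [AddCommGroup E]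
  [Module k E] (b : AffineBasis ι k E)

theorem mem_image_homothety_convexHull_iff {p x : E} {r : k} (hr : r ≠ 0) :
    x ∈ AffineMap.homothety p r '' convexHull k (Set.range b) ↔
      ∀ i, 0 ≤ r⁻¹ * (b.coord i x - b.coord i p) + b.coord i p := by
  simp only [mem_image_homothety_iff hr, b.convexHull_eq_nonneg_coord, Set.mem_ofPred_eq,
    apply_homothety]

/-- The corner piece at the vertex `b i` in the subdivision of the simplex spanned by `b`: the
simplex scaled by one half about that vertex. -/
def cornerSimplex (i : ι) : Set E :=
  AffineMap.homothety (b i) (1 / 2 : k) '' convexHull k (Set.range b)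

/-- The medial simplex of the simplex spanned by `b`, whose vertices are the centroids of its
facets. In dimension `n = card ι - 1` it is encoded as the image of the simplex under the homothety
of ratio `-1 / n` about its centroid. -/
def medialSimplex [Fintype ι] : Set E :=
  AffineMap.homothety (Finset.univ.centroid k b) (-((Fintype.card ι : k) - 1)⁻¹) ''
    convexHull k (Set.range b)

variable {b}

theorem mem_cornerSimplex_iff {i : ι} {x : E} :
    x ∈ cornerSimplex b i ↔ 1 / 2 ≤ b.coord i x ∧ ∀ j ≠ i, 0 ≤ b.coord j x := by
  have coord_vertex : ∀ j ≠ i, b.coord j (b i) = 0 := fun j hj ↦ b.coord_apply_ne hj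
  rw [cornerSimplex, mem_image_homothety_convexHull_iff b (by norm_num)]
  constructor
  · refine fun h ↦ ⟨?_, fun j hj ↦ ?_⟩
    · linarith [b.coord_apply_eq i ▸ h i]
    · linarith [coord_vertex j hj ▸ h j]
  · rintro ⟨hi, hne⟩ j
    obtain rfl | hj := eq_or_ne j i
    · rw [b.coord_apply_eq]
      linarith
    · rw [coord_vertex j hj]
      linarith [hne j hj]

theorem cornerSimplex_subset_convexHull (i : ι) :
    cornerSimplex b i ⊆ convexHull k (Set.range b) := by
  rw [b.convexHull_eq_nonneg_coord]
  intro x hx j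
  obtain ⟨hi, hne⟩ := mem_cornerSimplex_iff.1 hx
  obtain rfl | hj := eq_or_ne j i
  · linarith
  · exact hne j hj

theorem cornerSimplex_eq_convexHull (i : ι) :
    cornerSimplex b i = convexHull k (Set.range fun j ↦ midpoint k (b i) (b j)) := by
  rw [cornerSimplex, AffineMap.image_convexHull, ← Set.range_comp]
  simp only [Function.comp_def, homothety_one_half]

theorem coord_le_half_of_mem_cornerSimplex [Finite ι] {i j : ι} (hij : i ≠ j) {x : E}
    (hx : x ∈ cornerSimplex b i) : b.coord j x ≤ 1 / 2 := by
  classical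
  have := Fintype.ofFinite ι
  have nonneg : ∀ l, 0 ≤ b.coord l x :=
    b.convexHull_eq_nonneg_coord.subset (cornerSimplex_subset_convexHull i hx)
  have sum_pair_le_one : b.coord i x + b.coord j x ≤ 1 :=
    calc b.coord i x + b.coord j x = ∑ l ∈ {i, j}, b.coord l x :=
          (Finset.sum_pair (f := fun l ↦ b.coord l x) hij).symm
      _ ≤ ∑ l, b.coord l x := Finset.sum_le_univ_sum_of_nonneg nonneg
      _ = 1 := b.sum_coord_apply_eq_one x
  linarith [(mem_cornerSimplex_iff.1 hx).1]

section Fintype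

variable [Fintype ι]

theorem card_sub_one_pos [Nontrivial ι] : 0 < (Fintype.card ι : k) - 1 :=
  sub_pos.2 (Nat.one_lt_cast.2 Fintype.one_lt_card)

theorem mem_medialSimplex_iff [Nontrivial ι] {x : E} :
    x ∈ medialSimplex b ↔ ∀ i, b.coord i x ≤ ((Fintype.card ι : k) - 1)⁻¹ := by
  have hn : 0 < (Fintype.card ι : k) - 1 := card_sub_one_pos
  have hcard : (Fintype.card ι : k) ≠ 0 := by positivity
  rw [medialSimplex, mem_image_homothety_convexHull_iff b (neg_ne_zero.2 (inv_ne_zero hn.ne'))]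
  refine forall_congr' fun i ↦ ?_
  have preimage_coord : (-((Fintype.card ι : k) - 1)⁻¹)⁻¹ *
      (b.coord i x - (Fintype.card ι : k)⁻¹) + (Fintype.card ι : k)⁻¹ =
      1 - ((Fintype.card ι : k) - 1) * b.coord i x := by
    rw [inv_neg, inv_inv]
    field_simp
    ring
  rw [b.coord_apply_centroid (Finset.mem_univ i), Finset.card_univ, preimage_coord, sub_nonneg,
    ← le_div_iff₀' hn, one_div]

theorem medialSimplex_subset_convexHull [Nontrivial ι] :
    medialSimplex b ⊆ convexHull k (Set.range b) := by
  classical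
  rw [b.convexHull_eq_nonneg_coord]
  intro x hx i
  have hn : 0 < (Fintype.card ι : k) - 1 := card_sub_one_pos
  have sum_others_le_one : ∑ j ∈ Finset.univ.erase i, b.coord j x ≤ 1 :=
    calc ∑ j ∈ Finset.univ.erase i, b.coord j x
        ≤ (Finset.univ.erase i).card • ((Fintype.card ι : k) - 1)⁻¹ :=
          Finset.sum_le_card_nsmul _ _ _ fun j _ ↦ mem_medialSimplex_iff.1 hx j
      _ = 1 := by
          rw [Finset.card_erase_of_mem (Finset.mem_univ i), Finset.card_univ, nsmul_eq_mul,
            Nat.cast_pred Fintype.card_pos, mul_inv_cancel₀ hn.ne']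
  linarith [Finset.add_sum_erase _ (fun j ↦ b.coord j x) (Finset.mem_univ i),
    b.sum_coord_apply_eq_one x]

theorem iUnion_cornerSimplex_union_medialSimplex (hι : Fintype.card ι = 3) :
    (⋃ i, cornerSimplex b i) ∪ medialSimplex b = convexHull k (Set.range b) := by
  have : Nontrivial ι := Fintype.one_lt_card_iff_nontrivial.1 (by omega)
  refine (Set.union_subset (Set.iUnion_subset cornerSimplex_subset_convexHull)
    medialSimplex_subset_convexHull).antisymm fun x hx ↦ ?_
  rw [b.convexHull_eq_nonneg_coord] at hx
  by_cases h : ∃ i, 1 / 2 ≤ b.coord i x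
  · obtain ⟨i, hi⟩ := h
    exact .inl (Set.mem_iUnion.2 ⟨i, mem_cornerSimplex_iff.2 ⟨hi, fun j _ ↦ hx j⟩⟩)
  · push Not at h
    refine .inr (mem_medialSimplex_iff.2 fun i ↦ (h i).le.trans_eq ?_)
    norm_num [hι]

end Fintype

end Simplex

section Interior

theorem disjoint_interior_of_isOpenMap {X R : Type*} [TopologicalSpace X] [TopologicalSpace R]
    [LinearOrder R] [OrderTopology R] [DenselyOrdered R] [NoMinOrder R] [NoMaxOrder R]
    {f : X → R} (hf : IsOpenMap f) {c : R} {s t : Set X} (hs : Set.MapsTo f s (Set.Ici c))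
    (ht : Set.MapsTo f t (Set.Iic c)) : Disjoint (interior s) (interior t) := by
  have hs' : Set.MapsTo f (interior s) (Set.Ioi c) := interior_Ici (a := c) ▸ hf.mapsTo_interior hs
  have ht' : Set.MapsTo f (interior t) (Set.Iio c) := interior_Iic (a := c) ▸ hf.mapsTo_interior ht
  exact (Set.Ioi_disjoint_Iio_same.preimage f).mono hs' ht'

variable {ι E : Type*} [NormedAddCommGroup E] [NormedSpace ℝ E] {b : AffineBasis ι ℝ E}

theorem disjoint_interior_cornerSimplex [Finite ι] {i j : ι} (hij : i ≠ j) :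
    Disjoint (interior (cornerSimplex b i)) (interior (cornerSimplex b j)) :=
  have : Nontrivial ι := ⟨i, j, hij⟩
  disjoint_interior_of_isOpenMap (isOpenMap_barycentric_coord b i)
    (fun _ hx ↦ (mem_cornerSimplex_iff.1 hx).1)
    (fun _ hx ↦ coord_le_half_of_mem_cornerSimplex hij.symm hx)

theorem disjoint_interior_cornerSimplex_medialSimplex [Fintype ι] (hι : 3 ≤ Fintype.card ι)
    (i : ι) : Disjoint (interior (cornerSimplex b i)) (interior (medialSimplex b)) := by
  have : Nontrivial ι := Fintype.one_lt_card_iff_nontrivial.1 (by omega)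
  have inv_le_half : ((Fintype.card ι : ℝ) - 1)⁻¹ ≤ 1 / 2 := by
    rw [one_div]
    have : (3 : ℝ) ≤ Fintype.card ι := by exact_mod_cast hι
    exact inv_anti₀ two_pos (by linarith)
  exact disjoint_interior_of_isOpenMap (isOpenMap_barycentric_coord b i)
    (fun _ hx ↦ (mem_cornerSimplex_iff.1 hx).1)
    (fun _ hx ↦ (mem_medialSimplex_iff.1 hx i).trans inv_le_half)

end Interior

section Measure

variable {E : Type*} [NormedAddCommGroup E] [NormedSpace ℝ E] [MeasurableSpace E] [BorelSpace E]
  [FiniteDimensional ℝ E] (μ : Measure E) [μ.IsAddHaarMeasure]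

theorem addHaar_image_homothety_of_abs_eq_inv (p : E) {r : ℝ} {n : ℕ} (hn : n ≠ 0)
    (hr : |r| = (n : ℝ)⁻¹) (s : Set E) :
    μ (AffineMap.homothety p r '' s) = μ s / n ^ Module.finrank ℝ E := by
  have n_pos : (0 : ℝ) < n := by positivity
  rw [Measure.addHaar_image_homothety, abs_pow, hr, ENNReal.ofReal_pow (by positivity),
    ENNReal.ofReal_inv_of_pos n_pos, ENNReal.ofReal_natCast, ← ENNReal.inv_pow, mul_comm,
    div_eq_mul_inv]

variable {ι : Type*} (b : AffineBasis ι ℝ E)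

theorem addHaar_cornerSimplex (i : ι) :
    μ (cornerSimplex b i) = μ (convexHull ℝ (Set.range b)) / 2 ^ Module.finrank ℝ E := by
  rw [cornerSimplex]
  exact_mod_cast addHaar_image_homothety_of_abs_eq_inv μ (b i) two_ne_zero (by norm_num) _

theorem addHaar_medialSimplex [Fintype ι] [Nontrivial E] :
    μ (medialSimplex b) =
      μ (convexHull ℝ (Set.range b)) / Module.finrank ℝ E ^ Module.finrank ℝ E := by
  have card_sub_one : (Fintype.card ι : ℝ) - 1 = Module.finrank ℝ E := by
    rw [b.card_eq_finrank_add_one, Nat.cast_add_one, add_sub_cancel_right]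
  rw [medialSimplex, card_sub_one]
  exact addHaar_image_homothety_of_abs_eq_inv μ _ Module.finrank_pos.ne' (by simp) _

end Measure

theorem exists_affineBasis_coe_eq {ι k V P : Type*} [Fintype ι] [DivisionRing k]
    [AddCommGroup V] [Module k V] [FiniteDimensional k V] [AddTorsor V P] {p : ι → P}
    (hp : AffineIndependent k p) (hι : Fintype.card ι = Module.finrank k V + 1) :
    ∃ b : AffineBasis ι k P, ⇑b = p :=
  ⟨⟨p, hp, hp.affineSpan_eq_top_iff_card_eq_finrank_add_one.2 hι⟩, rfl⟩

section Triangle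

theorem convexHull_range_eq_tri (v : Fin 3 → E2) :
    convexHull ℝ (Set.range v) = tri (v 0) (v 1) (v 2) := by
  have range_eq : Set.range v = {v 0, v 1, v 2} := by
    ext x
    simp [Fin.exists_fin_succ, eq_comm]
  rw [tri, range_eq]

theorem tri_rotate (a b c : E2) : tri a b c = tri c a b := by
  rw [tri, tri, Set.insert_comm c a, Set.pair_comm c b]

variable (b : AffineBasis (Fin 3) ℝ E2)

theorem cornerSimplex_eq_tri (i : Fin 3) :
    cornerSimplex b i =
      tri (midpoint ℝ (b i) (b 0)) (midpoint ℝ (b i) (b 1)) (midpoint ℝ (b i) (b 2)) := by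
  rw [cornerSimplex_eq_convexHull, convexHull_range_eq_tri]

theorem medialSimplex_eq_tri :
    medialSimplex b =
      tri (midpoint ℝ (b 0) (b 1)) (midpoint ℝ (b 1) (b 2)) (midpoint ℝ (b 0) (b 2)) := by
  have centroid_eq : Finset.univ.centroid ℝ b = (1 / 3 : ℝ) • (b 0 + b 1 + b 2) := by
    rw [Finset.centroid_def, Finset.univ.affineCombination_eq_linear_combination _ _
      (Finset.univ.sum_centroidWeights_eq_one_of_nonempty ℝ Finset.univ_nonempty)]
    simp [Fin.sum_univ_three]
  have ratio_eq : -((Fintype.card (Fin 3) : ℝ) - 1)⁻¹ = -(1 / 2) := by norm_num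
  rw [medialSimplex, ratio_eq, centroid_eq, AffineMap.image_convexHull, ← Set.range_comp,
    convexHull_range_eq_tri, tri_rotate]
  simp only [Function.comp_apply, AffineMap.homothety_apply, vsub_eq_sub, vadd_eq_add,
    midpoint_eq_smul_add, invOf_eq_inv]
  congr 1 <;> module

theorem volume_cornerSimplex (i : Fin 3) :
    volume (cornerSimplex b i) = volume (convexHull ℝ (Set.range b)) / 4 := by
  rw [addHaar_cornerSimplex, finrank_euclideanSpace_fin]
  norm_num

theorem volume_medialSimplex :
    volume (medialSimplex b) = volume (convexHull ℝ (Set.range b)) / 4 := by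
  rw [addHaar_medialSimplex, finrank_euclideanSpace_fin]
  norm_num

end Triangle

/-- The four closed subtriangles of the red refinement of a nondegenerate triangle
`T = conv(v1,v2,v3)` have pairwise disjoint interiors, their union is `T`, and each
has area (two-dimensional Lebesgue measure) equal to one quarter of the area of `T`. -/
theorem stmt1 (v1 v2 v3 m12 m23 m13 : E2)
    (hT : AffineIndependent ℝ ![v1, v2, v3])
    (hm12 : m12 = midpoint ℝ v1 v2) (hm23 : m23 = midpoint ℝ v2 v3)
    (hm13 : m13 = midpoint ℝ v1 v3)
    (T1 T2 T3 T4 : Set E2)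
    (hT1 : T1 = tri v1 m12 m13) (hT2 : T2 = tri m12 v2 m23)
    (hT3 : T3 = tri m13 m23 v3) (hT4 : T4 = tri m12 m23 m13) :
    (Disjoint (interior T1) (interior T2) ∧ Disjoint (interior T1) (interior T3) ∧
      Disjoint (interior T1) (interior T4) ∧ Disjoint (interior T2) (interior T3) ∧
      Disjoint (interior T2) (interior T4) ∧ Disjoint (interior T3) (interior T4)) ∧
    T1 ∪ T2 ∪ T3 ∪ T4 = tri v1 v2 v3 ∧
    (volume T1 = volume (tri v1 v2 v3) / 4 ∧ volume T2 = volume (tri v1 v2 v3) / 4 ∧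
      volume T3 = volume (tri v1 v2 v3) / 4 ∧ volume T4 = volume (tri v1 v2 v3) / 4) := by
  obtain ⟨b, hb⟩ := exists_affineBasis_coe_eq hT (by simp)
  have hT' : tri v1 v2 v3 = convexHull ℝ (Set.range b) := by
    rw [convexHull_range_eq_tri, hb]; rfl
  have hT1' : T1 = cornerSimplex b 0 := by simp [hT1, hm12, hm13, cornerSimplex_eq_tri, hb]
  have hT2' : T2 = cornerSimplex b 1 := by
    simp [hT2, hm12, hm23, cornerSimplex_eq_tri, hb, midpoint_comm v2 v1]
  have hT3' : T3 = cornerSimplex b 2 := by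
    simp [hT3, hm13, hm23, cornerSimplex_eq_tri, hb, midpoint_comm v3]
  have hT4' : T4 = medialSimplex b := by
    simp [hT4, hm12, hm23, hm13, medialSimplex_eq_tri, hb]
  rw [hT', hT1', hT2', hT3', hT4']
  refine ⟨⟨disjoint_interior_cornerSimplex (by decide), disjoint_interior_cornerSimplex (by decide),
    disjoint_interior_cornerSimplex_medialSimplex le_rfl 0,
    disjoint_interior_cornerSimplex (by decide),
    disjoint_interior_cornerSimplex_medialSimplex le_rfl 1,
    disjoint_interior_cornerSimplex_medialSimplex le_rfl 2⟩, ?_,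
    volume_cornerSimplex b 0, volume_cornerSimplex b 1, volume_cornerSimplex b 2,
    volume_medialSimplex b⟩
  rw [← iUnion_cornerSimplex_union_medialSimplex (Fintype.card_fin 3)]
  congr 1
  ext x
  simp [Fin.exists_fin_succ, or_assoc]
end
end

section
/- Let T0 be a labeled triangle (an ordered triple of affinely independent points of ℝ²) with its reference edge. Then there exists θ0 > 0, depending only on T0, such that every newest vertex bisection descendant of T0 has minimal interior angle at least θ0; equivalently, the family of all triangles obtained from T0 by repeated newest vertex bisection is shape regular. -/
noncomputable section

open Metric

/-- The minimal interior angle of the triangle with vertices `a`, `b`, `c`. -/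
def minAngle (a b c : E2) : ℝ :=
  min (min (EuclideanGeometry.angle b a c) (EuclideanGeometry.angle a b c))
    (EuclideanGeometry.angle a c b)

/-- The inradius of a set: the supremum of radii of open balls contained in it. -/
def inradius (A : Set E2) : ℝ := sSup {r : ℝ | ∃ x : E2, ball x r ⊆ A}

/-- The two children of a labeled triangle `(v1, v2, v3)` (reference edge `[v1, v2]`)
produced by newest vertex bisection: `(v3, v1, m)` and `(v2, v3, m)`, where `m` is the
midpoint of `v1` and `v2`. -/
def nvbChildren (t : E2 × E2 × E2) : Set (E2 × E2 × E2) :=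
  {(t.2.2, t.1, midpoint ℝ t.1 t.2.1), (t.2.1, t.2.2, midpoint ℝ t.1 t.2.1)}

/-- `NVBDesc t s`: `s` is a newest-vertex-bisection descendant of the labeled triangle
`t`. -/
def NVBDesc : E2 × E2 × E2 → E2 × E2 × E2 → Prop :=
  Relation.ReflTransGen (fun t s => s ∈ nvbChildren t)

/-! Put the origin at the newest vertex and let `p`, `q` be the vectors to the other two vertices.
Up to sign, the corresponding vectors of either child are `(p + q) / 2` and `(p - q) / 2`. By the
parallelogram law bisection therefore halves `‖p‖ ^ 2 + ‖q‖ ^ 2`, and it also halves the area, so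
the quotient of the two is the same for all descendants. This quotient controls
`diameter ^ 2 / area`, which in turn bounds every angle from below and, through a ball around the
centroid, the inradius as well. -/

section LegSq

/-- The sum of the squared lengths of the two sides at the newest vertex `c` of the labeled
triangle `(a, b, c)`; together with the area it is the quantity that bisection halves. -/
def legSq {X : Type*} [Dist X] (a b c : X) : ℝ := dist a c ^ 2 + dist b c ^ 2

theorem diam_sq_le_two_mul_legSq {X : Type*} [PseudoMetricSpace X] (a b c : X) :
    diam {a, b, c} ^ 2 ≤ 2 * legSq a b c := by
  have hab : dist a b ^ 2 ≤ 2 * legSq a b c :=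
    calc dist a b ^ 2 ≤ (dist a c + dist b c) ^ 2 := by
          gcongr; exact dist_triangle_right a b c
      _ ≤ 2 * legSq a b c := add_sq_le
  have hac : dist a c ^ 2 ≤ 2 * legSq a b c := by
    unfold legSq; linarith [sq_nonneg (dist a c), sq_nonneg (dist b c)]
  have hbc : dist b c ^ 2 ≤ 2 * legSq a b c := by
    unfold legSq; linarith [sq_nonneg (dist a c), sq_nonneg (dist b c)]
  rw [← Real.le_sqrt diam_nonneg ((sq_nonneg _).trans hab), diam_triple]
  exact max_le (max_le (Real.le_sqrt_of_sq_le hab) (Real.le_sqrt_of_sq_le hac))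
    (Real.le_sqrt_of_sq_le hbc)

variable {V P : Type*} [NormedAddCommGroup V] [InnerProductSpace ℝ V] [MetricSpace P]
  [NormedAddTorsor V P]

theorem legSq_midpoint_left (a b c : P) : legSq c a (midpoint ℝ a b) = legSq a b c / 2 := by
  have apollonius :=
    EuclideanGeometry.dist_sq_add_dist_sq_eq_two_mul_dist_midpoint_sq_add_half_dist_sq c a b
  rw [legSq, legSq, dist_left_midpoint (𝕜 := ℝ), dist_comm a c, dist_comm b c, Real.norm_ofNat]
  linear_combination -apollonius / 2

theorem legSq_midpoint_right (a b c : P) : legSq b c (midpoint ℝ a b) = legSq a b c / 2 := by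
  have hm : dist b (midpoint ℝ a b) = dist a (midpoint ℝ a b) := by
    rw [dist_left_midpoint (𝕜 := ℝ), dist_right_midpoint (𝕜 := ℝ)]
  rw [← legSq_midpoint_left, legSq, legSq, hm, add_comm]

end LegSq

section DoubleArea

variable {V : Type*} [NormedAddCommGroup V] [InnerProductSpace ℝ V]
  [Fact (Module.finrank ℝ V = 2)] (o : Orientation ℝ V (Fin 2))

/-- Twice the signed area of the triangle with vertices `a`, `b`, `c`, in an oriented Euclidean
plane. -/
def doubleArea (a b c : V) : ℝ := o.areaForm (b - a) (c - a)

theorem doubleArea_eq_add (a b c : V) :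
    doubleArea o a b c = o.areaForm a b + o.areaForm b c + o.areaForm c a := by
  simp only [doubleArea, map_sub, LinearMap.sub_apply, o.areaForm_apply_self, o.areaForm_swap b a,
    o.areaForm_swap a c]
  ring

theorem doubleArea_rotate (a b c : V) : doubleArea o b c a = doubleArea o a b c := by
  simp only [doubleArea_eq_add]
  ring

theorem doubleArea_swap (a b c : V) : doubleArea o b a c = -doubleArea o a b c := by
  simp only [doubleArea_eq_add, o.areaForm_swap b a, o.areaForm_swap a c, o.areaForm_swap c b]
  ring

theorem doubleArea_midpoint_left (a b c : V) :
    doubleArea o c a (midpoint ℝ a b) = doubleArea o a b c / 2 := by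
  simp only [doubleArea_eq_add, midpoint_eq_smul_add, invOf_eq_inv, map_smul, map_add,
    LinearMap.smul_apply, LinearMap.add_apply, o.areaForm_apply_self, o.areaForm_swap a c,
    smul_eq_mul]
  ring

theorem doubleArea_midpoint_right (a b c : V) :
    doubleArea o b c (midpoint ℝ a b) = doubleArea o a b c / 2 := by
  simp only [doubleArea_eq_add, midpoint_eq_smul_add, invOf_eq_inv, map_smul, map_add,
    LinearMap.smul_apply, LinearMap.add_apply, o.areaForm_apply_self, o.areaForm_swap c b,
    smul_eq_mul]
  ring

theorem abs_doubleArea_eq_sin_angle_mul (a b c : V) :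
    |doubleArea o a b c| = Real.sin (EuclideanGeometry.angle b a c) * (dist b a * dist c a) := by
  have lagrange := o.inner_sq_add_areaForm_sq (b - a) (c - a)
  rw [EuclideanGeometry.angle, dist_eq_norm_vsub V, dist_eq_norm_vsub V,
    InnerProductGeometry.sin_angle_mul_norm_mul_norm, doubleArea, ← Real.sqrt_sq_eq_abs]
  congr 1
  simp only [vsub_eq_sub, real_inner_self_eq_norm_sq]
  linear_combination lagrange

theorem abs_doubleArea_le_angle_mul_diam_sq (a b c : V) :
    |doubleArea o a b c| ≤ EuclideanGeometry.angle b a c * diam {a, b, c} ^ 2 := by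
  have hbdd : Bornology.IsBounded {a, b, c} := (Set.toFinite _).isBounded
  have hb : dist b a ≤ diam {a, b, c} := dist_le_diam_of_mem hbdd (by simp) (by simp)
  have hc : dist c a ≤ diam {a, b, c} := dist_le_diam_of_mem hbdd (by simp) (by simp)
  have hangle := EuclideanGeometry.angle_nonneg b a c
  rw [abs_doubleArea_eq_sin_angle_mul, sq]
  gcongr
  exact Real.sin_le hangle

theorem doubleArea_ne_zero_of_affineIndependent {a b c : V}
    (h : AffineIndependent ℝ ![a, b, c]) : doubleArea o a b c ≠ 0 := by
  contrapose! h
  have hprod : Real.sin (EuclideanGeometry.angle b a c) * (dist b a * dist c a) = 0 := by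
    rw [← abs_doubleArea_eq_sin_angle_mul o, h, abs_zero]
  rw [affineIndependent_iff_not_collinear_set, not_not, Set.insert_comm,
    EuclideanGeometry.collinear_iff_eq_or_eq_or_sin_eq_zero]
  simpa only [mul_eq_zero, dist_eq_zero, or_comm, or_left_comm, or_assoc] using hprod

theorem diam_pos_of_doubleArea_ne_zero {a b c : V} (h : doubleArea o a b c ≠ 0) :
    0 < diam {a, b, c} := by
  refine diam_nonneg.lt_of_ne' fun hdiam => h ?_
  simpa [hdiam] using abs_doubleArea_le_angle_mul_diam_sq o a b c

theorem pos_of_diam_sq_le_mul_abs_doubleArea {a b c : V} {C : ℝ} (h : doubleArea o a b c ≠ 0)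
    (hC : diam {a, b, c} ^ 2 ≤ C * |doubleArea o a b c|) : 0 < C :=
  pos_of_mul_pos_left ((pow_pos (diam_pos_of_doubleArea_ne_zero o h) 2).trans_le hC)
    (abs_nonneg _)

theorem areaForm_smul_add_areaForm_smul_add_areaForm_smul (x y z : V) :
    o.areaForm y z • x + o.areaForm z x • y + o.areaForm x y • z = 0 := by
  rcases eq_or_ne x 0 with rfl | hx
  · simp
  refine InnerProductSpace.ext_inner_left_basis (𝕜 := ℝ) (o.basisRightAngleRotation x hx)
    fun i => ?_
  fin_cases i
  · simp only [Fin.zero_eta, Orientation.coe_basisRightAngleRotation, Matrix.cons_val_zero,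
      inner_add_right, inner_smul_right, real_inner_self_eq_norm_sq, inner_zero_right]
    linear_combination -o.inner_mul_areaForm_sub x y z + inner ℝ x y * o.areaForm_swap x z
  · simp only [Fin.mk_one, Orientation.coe_basisRightAngleRotation, Matrix.cons_val_one,
      Matrix.cons_val_fin_one, inner_add_right, inner_smul_right,
      Orientation.inner_rightAngleRotation_left, o.areaForm_apply_self, inner_zero_right]
    linear_combination o.areaForm x y * o.areaForm_swap x z

theorem doubleArea_eq_add_doubleArea (a b c p : V) :
    doubleArea o a b c = doubleArea o p b c + doubleArea o p c a + doubleArea o p a b := by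
  simp only [doubleArea_eq_add, o.areaForm_swap p]
  ring

theorem doubleArea_smul_eq (a b c p : V) :
    doubleArea o a b c • p =
      doubleArea o p b c • a + doubleArea o p c a • b + doubleArea o p a b • c := by
  have cramer := areaForm_smul_add_areaForm_smul_add_areaForm_smul o (a - p) (b - p) (c - p)
  rw [← sub_eq_zero, ← neg_eq_zero, ← cramer, doubleArea_eq_add_doubleArea o a b c p]
  simp only [doubleArea]
  module

theorem mem_convexHull_of_doubleArea_div_nonneg {a b c p : V} (h : doubleArea o a b c ≠ 0)
    (ha : 0 ≤ doubleArea o p b c / doubleArea o a b c)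
    (hb : 0 ≤ doubleArea o p c a / doubleArea o a b c)
    (hc : 0 ≤ doubleArea o p a b / doubleArea o a b c) : p ∈ convexHull ℝ {a, b, c} := by
  have hsum : doubleArea o p b c / doubleArea o a b c + doubleArea o p c a / doubleArea o a b c +
      doubleArea o p a b / doubleArea o a b c = 1 := by
    rw [← add_div, ← add_div, ← doubleArea_eq_add_doubleArea, div_self h]
  have hp : (doubleArea o p b c / doubleArea o a b c) • a +
      (doubleArea o p c a / doubleArea o a b c) • b +
      (doubleArea o p a b / doubleArea o a b c) • c = p := by
    simp only [div_eq_inv_mul, mul_smul, ← smul_add, ← doubleArea_smul_eq, inv_smul_smul₀ h]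
  refine mem_convexHull_of_exists_fintype ![doubleArea o p b c / doubleArea o a b c,
    doubleArea o p c a / doubleArea o a b c, doubleArea o p a b / doubleArea o a b c] ![a, b, c]
    ?_ ?_ ?_ ?_
  · simpa [Fin.forall_fin_succ] using ⟨ha, hb, hc⟩
  · simpa [Fin.sum_univ_three] using hsum
  · simp [Fin.forall_fin_succ]
  · simpa [Fin.sum_univ_three] using hp

theorem doubleArea_sub_doubleArea (p q b c : V) :
    doubleArea o p b c - doubleArea o q b c = o.areaForm (p - q) (b - c) := by
  simp only [doubleArea_eq_add, map_sub, LinearMap.sub_apply, o.areaForm_swap p c,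
    o.areaForm_swap q c]
  ring

theorem doubleArea_centroid (a b c : V) :
    doubleArea o ((3⁻¹ : ℝ) • (a + b + c)) b c = doubleArea o a b c / 3 := by
  simp only [doubleArea_eq_add, map_smul, map_add, LinearMap.smul_apply, LinearMap.add_apply,
    o.areaForm_apply_self, o.areaForm_swap c b, smul_eq_mul]
  ring

theorem doubleArea_div_nonneg_of_dist_centroid_mul_le {a b c p : V}
    (h : dist p ((3⁻¹ : ℝ) • (a + b + c)) * dist b c ≤ |doubleArea o a b c| / 3) :
    0 ≤ doubleArea o p b c / doubleArea o a b c := by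
  have hdiff : |doubleArea o p b c - doubleArea o a b c / 3| ≤ |doubleArea o a b c| / 3 := by
    rw [← doubleArea_centroid, doubleArea_sub_doubleArea]
    refine (o.abs_areaForm_le _ _).trans ?_
    rwa [← dist_eq_norm, ← dist_eq_norm]
  obtain ⟨hlow, hupp⟩ := abs_le.mp hdiff
  rcases abs_cases (doubleArea o a b c) with ⟨habs, hsign⟩ | ⟨habs, hsign⟩
  · exact div_nonneg (by linarith) hsign
  · exact div_nonneg_of_nonpos (by linarith) hsign.le

theorem ball_centroid_subset_convexHull {a b c : V} (h : doubleArea o a b c ≠ 0) :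
    ball ((3⁻¹ : ℝ) • (a + b + c)) (|doubleArea o a b c| / (3 * diam {a, b, c})) ⊆
      convexHull ℝ {a, b, c} := by
  intro p hp
  have hdist {u v : V} (hu : u ∈ ({a, b, c} : Set V)) (hv : v ∈ ({a, b, c} : Set V)) :
      dist p ((3⁻¹ : ℝ) • (a + b + c)) * dist u v ≤ |doubleArea o a b c| / 3 :=
    calc dist p ((3⁻¹ : ℝ) • (a + b + c)) * dist u v
        ≤ |doubleArea o a b c| / (3 * diam {a, b, c}) * diam {a, b, c} := by
          gcongr
          exacts [hp.le, dist_le_diam_of_mem (Set.toFinite _).isBounded hu hv]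
      _ = |doubleArea o a b c| / 3 := by
          have := diam_pos_of_doubleArea_ne_zero o h
          field_simp
  refine mem_convexHull_of_doubleArea_div_nonneg o h ?_ ?_ ?_
  · exact doubleArea_div_nonneg_of_dist_centroid_mul_le o (hdist (by simp) (by simp))
  · rw [← doubleArea_rotate o a b c]
    apply doubleArea_div_nonneg_of_dist_centroid_mul_le
    rw [doubleArea_rotate, show b + c + a = a + b + c by abel]
    exact hdist (by simp) (by simp)
  · rw [doubleArea_rotate o c a b]
    apply doubleArea_div_nonneg_of_dist_centroid_mul_le
    rw [← doubleArea_rotate, show c + a + b = a + b + c by abel]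
    exact hdist (by simp) (by simp)

end DoubleArea

section ShapeRegular

theorem le_inradius {A : Set E2} (hA : Bornology.IsBounded A) {x : E2} {r : ℝ}
    (h : ball x r ⊆ A) : r ≤ inradius A := by
  refine le_csSup ⟨diam A, ?_⟩ ⟨x, h⟩
  rintro s ⟨y, hy⟩
  rcases le_total s 0 with hs | hs
  · exact hs.trans diam_nonneg
  · have hdiam := diam_mono hy hA
    rw [diam_ball_eq y hs] at hdiam
    linarith

instance : Fact (Module.finrank ℝ E2 = 2) := ⟨finrank_euclideanSpace_fin⟩

variable (o : Orientation ℝ E2 (Fin 2))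

theorem abs_doubleArea_le_minAngle_mul_diam_sq (a b c : E2) :
    |doubleArea o a b c| ≤ minAngle a b c * diam {a, b, c} ^ 2 := by
  have ha := abs_doubleArea_le_angle_mul_diam_sq o a b c
  have hb := abs_doubleArea_le_angle_mul_diam_sq o b a c
  have hc := abs_doubleArea_le_angle_mul_diam_sq o c a b
  rw [doubleArea_swap, abs_neg, Set.insert_comm] at hb
  rw [← doubleArea_rotate, Set.insert_comm, Set.pair_comm] at hc
  rw [minAngle, min_mul_of_nonneg _ _ (sq_nonneg _), min_mul_of_nonneg _ _ (sq_nonneg _)]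
  exact le_min (le_min ha hb) hc

variable {a b c : E2}

theorem abs_doubleArea_le_mul_inradius (h : doubleArea o a b c ≠ 0) :
    |doubleArea o a b c| ≤ 3 * diam {a, b, c} * inradius (tri a b c) := by
  have hpos : 0 < diam {a, b, c} := diam_pos_of_doubleArea_ne_zero o h
  have hbdd : Bornology.IsBounded (tri a b c) :=
    isBounded_convexHull.mpr (Set.toFinite _).isBounded
  have hr := le_inradius hbdd (ball_centroid_subset_convexHull o h)
  rwa [div_le_iff₀' (by positivity)] at hr

theorem one_div_le_minAngle {C : ℝ} (h : doubleArea o a b c ≠ 0)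
    (hC : diam {a, b, c} ^ 2 ≤ C * |doubleArea o a b c|) : 1 / C ≤ minAngle a b c := by
  have harea : 0 < |doubleArea o a b c| := abs_pos.mpr h
  have hle := abs_doubleArea_le_minAngle_mul_diam_sq o a b c
  have hangle : 0 < minAngle a b c := pos_of_mul_pos_left (harea.trans_le hle) (sq_nonneg _)
  rw [div_le_iff₀ (pos_of_diam_sq_le_mul_abs_doubleArea o h hC)]
  refine le_of_mul_le_mul_right ?_ harea
  calc 1 * |doubleArea o a b c| ≤ minAngle a b c * diam {a, b, c} ^ 2 := by rwa [one_mul]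
    _ ≤ minAngle a b c * (C * |doubleArea o a b c|) := by gcongr
    _ = minAngle a b c * C * |doubleArea o a b c| := by ring

theorem diam_div_inradius_le {C : ℝ} (h : doubleArea o a b c ≠ 0)
    (hC : diam {a, b, c} ^ 2 ≤ C * |doubleArea o a b c|) :
    diam (tri a b c) / inradius (tri a b c) ≤ 3 * C := by
  have hdiam : 0 < diam {a, b, c} := diam_pos_of_doubleArea_ne_zero o h
  have hC0 : 0 < C := pos_of_diam_sq_le_mul_abs_doubleArea o h hC
  have hle := abs_doubleArea_le_mul_inradius o h
  have hr : 0 < inradius (tri a b c) :=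
    pos_of_mul_pos_right ((abs_pos.mpr h).trans_le hle) (by positivity)
  rw [div_le_iff₀ hr, tri, convexHull_diam]
  refine le_of_mul_le_mul_right ?_ hdiam
  calc diam {a, b, c} * diam {a, b, c} = diam {a, b, c} ^ 2 := (sq _).symm
    _ ≤ C * |doubleArea o a b c| := hC
    _ ≤ C * (3 * diam {a, b, c} * inradius (tri a b c)) := by gcongr
    _ = 3 * C * inradius (tri a b c) * diam {a, b, c} := by ring

end ShapeRegular

section Descendants

variable (o : Orientation ℝ E2 (Fin 2)) {a b c : E2} {s t : E2 × E2 × E2}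

theorem legSq_of_mem_nvbChildren (h : s ∈ nvbChildren t) :
    legSq s.1 s.2.1 s.2.2 = legSq t.1 t.2.1 t.2.2 / 2 := by
  rcases h with rfl | rfl
  · exact legSq_midpoint_left _ _ _
  · exact legSq_midpoint_right _ _ _

theorem doubleArea_of_mem_nvbChildren (h : s ∈ nvbChildren t) :
    doubleArea o s.1 s.2.1 s.2.2 = doubleArea o t.1 t.2.1 t.2.2 / 2 := by
  rcases h with rfl | rfl
  · exact doubleArea_midpoint_left o _ _ _
  · exact doubleArea_midpoint_right o _ _ _

theorem NVBDesc.exists_legSq_eq_and_doubleArea_eq (h : NVBDesc (a, b, c) t) :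
    ∃ r > 0, legSq t.1 t.2.1 t.2.2 = r * legSq a b c ∧
      doubleArea o t.1 t.2.1 t.2.2 = r * doubleArea o a b c := by
  induction h with
  | refl => exact ⟨1, one_pos, (one_mul _).symm, (one_mul _).symm⟩
  | tail _ hchild ih =>
    obtain ⟨r, hr, hleg, harea⟩ := ih
    refine ⟨r / 2, half_pos hr, ?_, ?_⟩
    · rw [legSq_of_mem_nvbChildren hchild, hleg, mul_div_right_comm]
    · rw [doubleArea_of_mem_nvbChildren o hchild, harea, mul_div_right_comm]

theorem NVBDesc.doubleArea_ne_zero (h : NVBDesc (a, b, c) t) (habc : doubleArea o a b c ≠ 0) :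
    doubleArea o t.1 t.2.1 t.2.2 ≠ 0 := by
  obtain ⟨r, hr, -, harea⟩ := h.exists_legSq_eq_and_doubleArea_eq o
  exact harea ▸ mul_ne_zero hr.ne' habc

theorem exists_diam_sq_le_of_nvbDesc (habc : doubleArea o a b c ≠ 0) :
    ∃ C > 0, ∀ t, NVBDesc (a, b, c) t →
      diam {t.1, t.2.1, t.2.2} ^ 2 ≤ C * |doubleArea o t.1 t.2.1 t.2.2| := by
  have hdiam : ∀ t, NVBDesc (a, b, c) t → diam {t.1, t.2.1, t.2.2} ^ 2 ≤
      2 * legSq a b c / |doubleArea o a b c| * |doubleArea o t.1 t.2.1 t.2.2| := by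
    intro t ht
    obtain ⟨r, hr, hleg, harea⟩ := ht.exists_legSq_eq_and_doubleArea_eq o
    calc diam {t.1, t.2.1, t.2.2} ^ 2
        ≤ 2 * legSq t.1 t.2.1 t.2.2 := diam_sq_le_two_mul_legSq _ _ _
      _ = 2 * legSq a b c / |doubleArea o a b c| * |doubleArea o t.1 t.2.1 t.2.2| := by
        rw [hleg, harea, abs_mul, abs_of_pos hr]
        field_simp
  have hself : NVBDesc (a, b, c) (a, b, c) := Relation.ReflTransGen.refl
  exact ⟨_, pos_of_diam_sq_le_mul_abs_doubleArea o habc (hdiam (a, b, c) hself), hdiam⟩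

end Descendants

/-- There is `θ0 > 0`, depending only on the labeled triangle `T0 = (v1, v2, v3)`, such
that every newest-vertex-bisection descendant of `T0` has minimal interior angle at least
`θ0`; equivalently, the family of all NVB descendants of `T0` is shape regular: there is
`c ≥ 1` bounding `h_T / ρ_T` for all descendants `T`. -/
theorem stmt4 (v1 v2 v3 : E2) (hT : AffineIndependent ℝ ![v1, v2, v3]) :
    (∃ θ0 : ℝ, 0 < θ0 ∧ ∀ t : E2 × E2 × E2, NVBDesc (v1, v2, v3) t →
        θ0 ≤ minAngle t.1 t.2.1 t.2.2) ∧
    (∃ c : ℝ, 1 ≤ c ∧ ∀ t : E2 × E2 × E2, NVBDesc (v1, v2, v3) t →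
        diam (tri t.1 t.2.1 t.2.2) / inradius (tri t.1 t.2.1 t.2.2) ≤ c) := by
  obtain ⟨o⟩ : Nonempty (Orientation ℝ E2 (Fin 2)) :=
    ⟨(EuclideanSpace.basisFun (Fin 2) ℝ).toBasis.orientation⟩
  have harea : doubleArea o v1 v2 v3 ≠ 0 := doubleArea_ne_zero_of_affineIndependent o hT
  obtain ⟨C, hC, hdiam⟩ := exists_diam_sq_le_of_nvbDesc o harea
  refine ⟨⟨1 / C, one_div_pos.mpr hC, fun t ht => ?_⟩,
    max 1 (3 * C), le_max_left _ _, fun t ht => le_max_of_le_right ?_⟩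
  · exact one_div_le_minAngle o (ht.doubleArea_ne_zero o harea) (hdiam t ht)
  · exact diam_div_inradius_le o (ht.doubleArea_ne_zero o harea) (hdiam t ht)
end
end

section
/- Let v1, v2, v3, v4 (listed counterclockwise) be the vertices of a convex quadrilateral Q = conv{v1, v2, v3, v4} in ℝ², let mij be the midpoint of vi and vj, and let c = (v1 + v2 + v3 + v4)/4. Then each of the four subquadrilaterals of the red refinement of Q, namely conv{v1, m12, c, m41}, conv{m12, v2, m23, c}, conv{c, m23, v3, m34}, and conv{m41, c, m34, v4}, is again a convex quadrilateral with nonempty interior: its four listed vertices are in convex position with no three of them collinear. -/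
noncomputable section

/-- The points `a`, `b`, `c` are in counterclockwise order (positively oriented). -/
def Ccw (a b c : E2) : Prop :=
  0 < (b 0 - a 0) * (c 1 - a 1) - (b 1 - a 1) * (c 0 - a 0)

/-- The (listed) points `a, b, c, d` are the vertices of a convex quadrilateral: they are
in convex position, with no three of them collinear. -/
def ConvexQuad (a b c d : E2) : Prop :=
  (¬ Collinear ℝ ({a, b, c} : Set E2) ∧ ¬ Collinear ℝ ({a, b, d} : Set E2) ∧
    ¬ Collinear ℝ ({a, c, d} : Set E2) ∧ ¬ Collinear ℝ ({b, c, d} : Set E2)) ∧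
  (a ∉ convexHull ℝ ({b, c, d} : Set E2) ∧ b ∉ convexHull ℝ ({a, c, d} : Set E2) ∧
    c ∉ convexHull ℝ ({a, b, d} : Set E2) ∧ d ∉ convexHull ℝ ({a, b, c} : Set E2))

/-!
The homothety with centre `v1` and ratio `2` carries the subquadrilateral at the vertex `v1` to the
quadrilateral `v1 v2 p v4`, where `p` is the midpoint of `v3` and the vertex `v2 + v4 - v1` that
completes `v2, v1, v4` to a parallelogram. Both `v1 v2 v3 v4` and the parallelogram are
counterclockwise convex quadrilaterals, and for fixed `v1`, `v2`, `v4` the admissible third vertices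
form a convex set, being an intersection of half-planes; hence `p` is admissible too. The other
three subquadrilaterals follow by cyclically rotating the vertices.
-/

theorem interior_convexHull_nonempty_of_affineIndependent {ι E : Type*} [Fintype ι]
    [NormedAddCommGroup E] [NormedSpace ℝ E] [FiniteDimensional ℝ E] {p : ι → E} {s : Set E}
    (hp : AffineIndependent ℝ p) (hcard : Fintype.card ι = Module.finrank ℝ E + 1)
    (hs : Set.range p ⊆ s) : (interior (convexHull ℝ s)).Nonempty := by
  rw [interior_convexHull_nonempty_iff_affineSpan_eq_top, eq_top_iff,
    ← hp.affineSpan_eq_top_iff_card_eq_finrank_add_one.2 hcard]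
  exact affineSpan_mono ℝ hs

theorem notMem_convexHull_of_affineMap_neg {𝕜 V : Type*} [Ring 𝕜] [PartialOrder 𝕜]
    [IsOrderedRing 𝕜] [AddCommGroup V] [Module 𝕜 V] {f : V →ᵃ[𝕜] 𝕜} {s : Set V} {x : V}
    (hs : ∀ y ∈ s, 0 ≤ f y) (hx : f x < 0) : x ∉ convexHull 𝕜 s := fun hmem ↦
  hx.not_ge (convexHull_min hs ((convex_Ici 0).affine_preimage f) hmem)

theorem affineMap_add_sub {𝕜 V W : Type*} [Ring 𝕜] [AddCommGroup V] [Module 𝕜 V]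
    [AddCommGroup W] [Module 𝕜 W] (f : V →ᵃ[𝕜] W) (x y z : V) :
    f (x + y - z) = f x + f y - f z := by
  rw [f.decomp]
  simp only [Pi.add_apply, map_add, map_sub]
  abel

section SignedArea

variable {𝕜 V : Type*} [CommRing 𝕜] [AddCommGroup V] [Module 𝕜 V] {ω : V →ₗ[𝕜] V →ₗ[𝕜] 𝕜}

/-- Twice the signed area of the triangle `a b c`, measured by an area form `ω`. It is bundled as an
affine map of `c`, so that its sign tells on which side of the line `a b` the point `c` lies. -/
def signedArea (ω : V →ₗ[𝕜] V →ₗ[𝕜] 𝕜) (a b : V) : V →ᵃ[𝕜] 𝕜 :=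
  (ω (b - a)).toAffineMap.comp (AffineMap.id 𝕜 V - AffineMap.const 𝕜 V a)

theorem signedArea_apply (a b c : V) : signedArea ω a b c = ω (b - a) (c - a) := rfl

theorem signedArea_left (a b : V) : signedArea ω a b a = 0 := by
  simp only [signedArea_apply, sub_self, map_zero]

theorem signedArea_right (hω : ω.IsAlt) (a b : V) : signedArea ω a b b = 0 :=
  hω (b - a)

theorem signedArea_swap (hω : ω.IsAlt) (a b c : V) :
    signedArea ω a c b = -signedArea ω a b c :=
  (hω.neg _ _).symm

theorem signedArea_rotate (hω : ω.IsAlt) (a b c : V) :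
    signedArea ω b c a = signedArea ω a b c := by
  have hcb : ω c b = -ω b c := (hω.neg b c).symm
  have hca : ω c a = -ω a c := (hω.neg a c).symm
  simp only [signedArea_apply, map_sub, LinearMap.sub_apply, hω.self_eq_zero]
  linear_combination hca - hcb

theorem signedArea_homothety (p a b c : V) (r : 𝕜) :
    signedArea ω (AffineMap.homothety p r a) (AffineMap.homothety p r b)
      (AffineMap.homothety p r c) = r ^ 2 * signedArea ω a b c := by
  have hsub (x y : V) : AffineMap.homothety p r x - AffineMap.homothety p r y = r • (x - y) := by
    simp only [AffineMap.homothety_apply, vsub_eq_sub, vadd_eq_add, smul_sub]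
    abel
  simp only [signedArea_apply, hsub, map_smul, LinearMap.smul_apply, smul_eq_mul]
  ring

theorem signedArea_eq_zero_of_collinear {K W : Type*} [Field K] [AddCommGroup W] [Module K W]
    {ω : W →ₗ[K] W →ₗ[K] K} (hω : ω.IsAlt) {a b c : W} (h : Collinear K {a, b, c}) :
    signedArea ω a b c = 0 := by
  obtain ⟨v, hv⟩ := (collinear_iff_of_mem (p₀ := a) (by simp)).1 h
  obtain ⟨r, rfl⟩ := hv b (by simp)
  obtain ⟨s, rfl⟩ := hv c (by simp)
  simp [signedArea_apply, hω.self_eq_zero]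

end SignedArea

/-- The middle node of the quadrilateral `a b c d`, where its two bimedians meet. -/
def middleNode (𝕜 : Type*) {V : Type*} [DivisionRing 𝕜] [AddCommGroup V] [Module 𝕜 V]
    (a b c d : V) : V :=
  (4 : 𝕜)⁻¹ • (a + b + c + d)

theorem middleNode_rotate (𝕜 : Type*) {V : Type*} [DivisionRing 𝕜] [AddCommGroup V] [Module 𝕜 V]
    (a b c d : V) : middleNode 𝕜 b c d a = middleNode 𝕜 a b c d := by
  rw [middleNode, middleNode, show b + c + d + a = a + b + c + d by abel]

section OrderedRing

variable {𝕜 V : Type*} [CommRing 𝕜] [LinearOrder 𝕜] [AddCommGroup V] [Module 𝕜 V]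
  {ω : V →ₗ[𝕜] V →ₗ[𝕜] 𝕜} {a b c d : V}

/-- `a b c d` is a strictly convex quadrilateral traversed counterclockwise with respect to the area
form `ω`: any three consecutive vertices make a left turn. -/
structure IsCcwQuad (ω : V →ₗ[𝕜] V →ₗ[𝕜] 𝕜) (a b c d : V) : Prop where
  abc_pos : 0 < signedArea ω a b c
  bcd_pos : 0 < signedArea ω b c d
  cda_pos : 0 < signedArea ω c d a
  dab_pos : 0 < signedArea ω d a b

theorem IsCcwQuad.rotate (h : IsCcwQuad ω a b c d) : IsCcwQuad ω b c d a :=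
  ⟨h.bcd_pos, h.cda_pos, h.dab_pos, h.abc_pos⟩

-- Unlike in the definition, `c` occurs only in the affine slot of `signedArea`.
theorem isCcwQuad_iff_halfPlanes (hω : ω.IsAlt) : IsCcwQuad ω a b c d ↔
    0 < signedArea ω a b c ∧ 0 < signedArea ω d b c ∧ 0 < signedArea ω d a c ∧
      0 < signedArea ω d a b := by
  have hbcd : signedArea ω b c d = signedArea ω d b c := signedArea_rotate hω d b c
  have hcda : signedArea ω c d a = signedArea ω d a c := (signedArea_rotate hω c d a).symm
  rw [← hbcd, ← hcda]
  exact ⟨fun ⟨h₁, h₂, h₃, h₄⟩ ↦ ⟨h₁, h₂, h₃, h₄⟩, fun ⟨h₁, h₂, h₃, h₄⟩ ↦ ⟨h₁, h₂, h₃, h₄⟩⟩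

theorem isCcwQuad_parallelogram (hω : ω.IsAlt) (h : 0 < signedArea ω d a b) :
    IsCcwQuad ω a b (b + d - a) d := by
  have habd : signedArea ω a b d = signedArea ω d a b := signedArea_rotate hω d a b
  have hdba : signedArea ω d b a = -signedArea ω d a b := signedArea_swap hω d a b
  simp only [isCcwQuad_iff_halfPlanes hω, affineMap_add_sub, signedArea_left,
    signedArea_right hω, habd, hdba, zero_add, add_zero, sub_zero, zero_sub, neg_neg, h, and_self]

variable [IsStrictOrderedRing 𝕜]

theorem IsCcwQuad.notMem_convexHull (hω : ω.IsAlt) (h : IsCcwQuad ω a b c d) :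
    a ∉ convexHull 𝕜 {b, c, d} := by
  obtain ⟨-, hc, -, ha⟩ := (isCcwQuad_iff_halfPlanes hω).1 h
  have ha' : signedArea ω d b a < 0 := by rwa [signedArea_swap hω, neg_lt_zero]
  refine notMem_convexHull_of_affineMap_neg (f := signedArea ω d b) ?_ ha'
  rintro y (rfl | rfl | rfl)
  exacts [(signedArea_right hω _ _).ge, hc.le, (signedArea_left _ _).ge]

theorem convex_setOf_isCcwQuad_third (hω : ω.IsAlt) (a b d : V) :
    Convex 𝕜 {c | IsCcwQuad ω a b c d} := by
  have convex_halfPlane (x y : V) : Convex 𝕜 {z | 0 < signedArea ω x y z} :=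
    (convex_Ioi 0).affine_preimage (signedArea ω x y)
  intro c hc c' hc' s t hs ht hst
  obtain ⟨h₁, h₂, h₃, h₄⟩ := (isCcwQuad_iff_halfPlanes hω).1 hc
  obtain ⟨h₁', h₂', h₃', -⟩ := (isCcwQuad_iff_halfPlanes hω).1 hc'
  exact (isCcwQuad_iff_halfPlanes hω).2 ⟨convex_halfPlane a b h₁ h₁' hs ht hst,
    convex_halfPlane d b h₂ h₂' hs ht hst, convex_halfPlane d a h₃ h₃' hs ht hst, h₄⟩

theorem IsCcwQuad.homothety (h : IsCcwQuad ω a b c d) (p : V) {r : 𝕜} (hr : r ≠ 0) :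
    IsCcwQuad ω (AffineMap.homothety p r a) (AffineMap.homothety p r b)
      (AffineMap.homothety p r c) (AffineMap.homothety p r d) := by
  have hr2 : 0 < r ^ 2 := by positivity
  constructor <;> rw [signedArea_homothety]
  exacts [mul_pos hr2 h.abc_pos, mul_pos hr2 h.bcd_pos, mul_pos hr2 h.cda_pos,
    mul_pos hr2 h.dab_pos]

end OrderedRing

section OrderedField

variable {𝕜 V : Type*} [Field 𝕜] [LinearOrder 𝕜] [AddCommGroup V] [Module 𝕜 V]
  {ω : V →ₗ[𝕜] V →ₗ[𝕜] 𝕜} {a b c d : V}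

theorem IsCcwQuad.not_collinear (hω : ω.IsAlt) (h : IsCcwQuad ω a b c d) :
    ¬ Collinear 𝕜 {a, b, c} :=
  fun hcol ↦ h.abc_pos.ne' (signedArea_eq_zero_of_collinear hω hcol)

theorem IsCcwQuad.corner [IsStrictOrderedRing 𝕜] (hω : ω.IsAlt) (h : IsCcwQuad ω a b c d) :
    IsCcwQuad ω a (midpoint 𝕜 a b) (middleNode 𝕜 a b c d) (midpoint 𝕜 d a) := by
  have hp : IsCcwQuad ω a b (midpoint 𝕜 c (b + d - a)) d :=
    (convex_setOf_isCcwQuad_third hω a b d).midpoint_mem h (isCcwQuad_parallelogram hω h.dab_pos)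
  have hcentre : midpoint 𝕜 a (midpoint 𝕜 c (b + d - a)) = middleNode 𝕜 a b c d := by
    simp only [midpoint_eq_smul_add, middleNode, invOf_eq_inv]
    module
  have hhalf := hp.homothety a (invertibleInvOf (a := (2 : 𝕜))).ne_zero
  simpa only [AffineMap.homothety_apply_same, homothety_invOf_two, hcentre,
    midpoint_comm a d] using hhalf

end OrderedField

section EuclideanPlane

instance inst_s8 : Fact (Module.finrank ℝ E2 = 2) := ⟨finrank_euclideanSpace_fin⟩

/-- The area form of the plane `E2` with its standard orientation, through which `Ccw` becomes
positivity of `signedArea`. -/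
def stdAreaForm : E2 →ₗ[ℝ] E2 →ₗ[ℝ] ℝ :=
  (EuclideanSpace.basisFun (Fin 2) ℝ).toBasis.orientation.areaForm

theorem stdAreaForm_isAlt : stdAreaForm.IsAlt :=
  Orientation.areaForm_apply_self _

theorem stdAreaForm_apply (x y : E2) : stdAreaForm x y = x 0 * y 1 - x 1 * y 0 := by
  rw [stdAreaForm, Orientation.areaForm_to_volumeForm,
    Orientation.volumeForm_robust _ (EuclideanSpace.basisFun (Fin 2) ℝ) rfl,
    Module.Basis.det_apply, Matrix.det_fin_two]
  simp [Module.Basis.toMatrix_apply, mul_comm]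

variable {a b c d : E2}

theorem ccw_iff_signedArea_pos : Ccw a b c ↔ 0 < signedArea stdAreaForm a b c := by
  simp only [Ccw, signedArea_apply, stdAreaForm_apply, PiLp.sub_apply]

theorem IsCcwQuad.convexQuad (h : IsCcwQuad stdAreaForm a b c d) : ConvexQuad a b c d := by
  have hω := stdAreaForm_isAlt
  have hbcda := h.rotate
  have hcdab := hbcda.rotate
  have hdabc := hcdab.rotate
  have hset_cda : ({c, d, a} : Set E2) = {a, c, d} := by rw [Set.pair_comm, Set.insert_comm]
  have hset_dab : ({d, a, b} : Set E2) = {a, b, d} := by rw [Set.insert_comm, Set.pair_comm]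
  exact ⟨⟨h.not_collinear hω, hset_dab ▸ hdabc.not_collinear hω,
      hset_cda ▸ hcdab.not_collinear hω, hbcda.not_collinear hω⟩,
    h.notMem_convexHull hω, hset_cda ▸ hbcda.notMem_convexHull hω,
    hset_dab ▸ hcdab.notMem_convexHull hω, hdabc.notMem_convexHull hω⟩

theorem IsCcwQuad.interior_convexHull_nonempty (h : IsCcwQuad stdAreaForm a b c d) :
    (interior (convexHull ℝ {a, b, c, d})).Nonempty := by
  have habc : AffineIndependent ℝ ![a, b, c] :=
    affineIndependent_iff_not_collinear_set.2 (h.not_collinear stdAreaForm_isAlt)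
  refine interior_convexHull_nonempty_of_affineIndependent habc (by simp) ?_
  rintro x ⟨i, rfl⟩
  fin_cases i <;> simp

end EuclideanPlane

/-- Each of the four subquadrilaterals of the red refinement of a convex quadrilateral
with counterclockwise-listed vertices `v1, v2, v3, v4` is again a convex quadrilateral
with nonempty interior. -/
theorem stmt8 (v1 v2 v3 v4 m12 m23 m34 m41 c : E2)
    (hquad : ConvexQuad v1 v2 v3 v4)
    (hccw : Ccw v1 v2 v3 ∧ Ccw v2 v3 v4 ∧ Ccw v3 v4 v1 ∧ Ccw v4 v1 v2)
    (hm12 : m12 = midpoint ℝ v1 v2) (hm23 : m23 = midpoint ℝ v2 v3)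
    (hm34 : m34 = midpoint ℝ v3 v4) (hm41 : m41 = midpoint ℝ v4 v1)
    (hc : c = (4 : ℝ)⁻¹ • (v1 + v2 + v3 + v4)) :
    (ConvexQuad v1 m12 c m41 ∧
      (interior (convexHull ℝ ({v1, m12, c, m41} : Set E2))).Nonempty) ∧
    (ConvexQuad m12 v2 m23 c ∧
      (interior (convexHull ℝ ({m12, v2, m23, c} : Set E2))).Nonempty) ∧
    (ConvexQuad c m23 v3 m34 ∧
      (interior (convexHull ℝ ({c, m23, v3, m34} : Set E2))).Nonempty) ∧
    (ConvexQuad m41 c m34 v4 ∧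
      (interior (convexHull ℝ ({m41, c, m34, v4} : Set E2))).Nonempty) := by
  have hω := stdAreaForm_isAlt
  obtain ⟨h123, h234, h341, h412⟩ := hccw
  have h₁ : IsCcwQuad stdAreaForm v1 v2 v3 v4 :=
    ⟨ccw_iff_signedArea_pos.1 h123, ccw_iff_signedArea_pos.1 h234,
      ccw_iff_signedArea_pos.1 h341, ccw_iff_signedArea_pos.1 h412⟩
  have h₂ := h₁.rotate
  have h₃ := h₂.rotate
  have h₄ := h₃.rotate
  have hc₁ : c = middleNode ℝ v1 v2 v3 v4 := hc
  have hc₂ : c = middleNode ℝ v2 v3 v4 v1 := hc₁.trans (middleNode_rotate ..).symm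
  have hc₃ : c = middleNode ℝ v3 v4 v1 v2 := hc₂.trans (middleNode_rotate ..).symm
  have hc₄ : c = middleNode ℝ v4 v1 v2 v3 := hc₃.trans (middleNode_rotate ..).symm
  have q₁ : IsCcwQuad stdAreaForm v1 m12 c m41 := hm12 ▸ hc₁ ▸ hm41 ▸ h₁.corner hω
  have q₂ : IsCcwQuad stdAreaForm v2 m23 c m12 := hm23 ▸ hc₂ ▸ hm12 ▸ h₂.corner hω
  have q₃ : IsCcwQuad stdAreaForm v3 m34 c m23 := hm34 ▸ hc₃ ▸ hm23 ▸ h₃.corner hω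
  have q₄ : IsCcwQuad stdAreaForm v4 m41 c m34 := hm41 ▸ hc₄ ▸ hm34 ▸ h₄.corner hω
  exact ⟨⟨q₁.convexQuad, q₁.interior_convexHull_nonempty⟩,
    ⟨q₂.rotate.rotate.rotate.convexQuad, q₂.rotate.rotate.rotate.interior_convexHull_nonempty⟩,
    ⟨q₃.rotate.rotate.convexQuad, q₃.rotate.rotate.interior_convexHull_nonempty⟩,
    ⟨q₄.rotate.convexQuad, q₄.rotate.interior_convexHull_nonempty⟩⟩
end
end
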